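/- Assume ∇K ∈ W^{1,∞}(ℝ^d), let f₀ be a Borel probability measure on ℝ^d × ℝ^d supported in the ball B_{R₀}, ε > 0, T > 0, and let f : [0,T] → P(ℝ^d × ℝ^d) be a measure solution of the kinetic aggregation equation with inertia parameter ε and initial datum f₀, with x-marginals ρ(t). Set V = max(R₀, ‖∇K‖_{L^∞}). Then for all s, t ∈ [0,T] and all x, y ∈ ℝ^d, | (∇K ∗ ρ(t))(x) − (∇K ∗ ρ(s))(y) | ≤ ‖∇K‖_{W^{1,∞}} (1 + V) ( |t − s| + |x − y| ). In particular the interaction field (t,x) ↦ (∇K ∗ ρ(t))(x) is Lipschitz in (t,x) with a constant independent of ε. -/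

import Mathlib

open Set Filter Topology MeasureTheory

/-- The interaction field `(∇K ∗ μ)(x) = ∫ ∇K(x - y) dμ(y)`. -/
noncomputable def interactionField {d : ℕ}
    (gradK : EuclideanSpace ℝ (Fin d) → EuclideanSpace ℝ (Fin d))
    (μ : Measure (EuclideanSpace ℝ (Fin d))) (x : EuclideanSpace ℝ (Fin d)) :
    EuclideanSpace ℝ (Fin d) :=
  ∫ y, gradK (x - y) ∂μ

/-- `f : [0,T] → P(ℝ^d × ℝ^d)` is a measure solution of the kinetic aggregation
equation with inertia parameter `ε` and initial datum `f₀`: `f t` is the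
push-forward of `f₀` under the flow map `Φ t` of the characteristic system
`dx/dt = v`, `ε dv/dt = -v - (∇K ∗ ρ)(t,x)`, where `ρ t` is the first marginal
of `f t`. -/
def IsKineticMeasureSolution {d : ℕ}
    (gradK : EuclideanSpace ℝ (Fin d) → EuclideanSpace ℝ (Fin d)) (ε T : ℝ)
    (f₀ : Measure (EuclideanSpace ℝ (Fin d) × EuclideanSpace ℝ (Fin d)))
    (f : ℝ → Measure (EuclideanSpace ℝ (Fin d) × EuclideanSpace ℝ (Fin d))) : Prop :=
  ∃ Φ : ℝ → (EuclideanSpace ℝ (Fin d) × EuclideanSpace ℝ (Fin d)) →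
        (EuclideanSpace ℝ (Fin d) × EuclideanSpace ℝ (Fin d)),
    (∀ t, Measurable (Φ t)) ∧
    (∀ p, Φ 0 p = p) ∧
    (∀ p, ∀ t ∈ Icc (0:ℝ) T,
      HasDerivAt (fun s => (Φ s p).1) ((Φ t p).2) t ∧
      HasDerivAt (fun s => (Φ s p).2)
        (ε⁻¹ • (-(Φ t p).2 -
          interactionField gradK ((f t).map Prod.fst) (Φ t p).1)) t) ∧
    (∀ t ∈ Icc (0:ℝ) T, f t = f₀.map (Φ t))

/-!
Along a characteristic, `d/dt (exp (t/ε) v) = -ε⁻¹ exp (t/ε) (∇K ∗ ρ)`. If the force is bounded by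
`V`, the right-hand side has norm at most `d/dt (exp (t/ε) V)`, so a speed that is initially at
most `V` stays at most `V`; the factor `ε⁻¹` cancels, which is why the constant does not depend
on `ε`. Hence positions move by at most `V |t - s|`, and since `ρ t` is the law of the position at
time `t` under `f₀`, the difference of the two fields is the average over `f₀` of a difference of
values of `∇K` at points at distance at most `‖x - y‖ + V |t - s|`.
-/

section Damping

variable {E : Type*} [NormedAddCommGroup E] [NormedSpace ℝ E]

theorem norm_le_of_hasDerivAt_damped {v F : ℝ → E} {a b c V : ℝ} (hc : 0 ≤ c)
    (hv : ∀ t ∈ Icc a b, HasDerivAt v (c • (-v t - F t)) t) (hF : ∀ t ∈ Icc a b, ‖F t‖ ≤ V)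
    (ha : ‖v a‖ ≤ V) {t : ℝ} (ht : t ∈ Icc a b) : ‖v t‖ ≤ V := by
  have hexp (s : ℝ) : HasDerivAt (fun r ↦ Real.exp (c * r)) (Real.exp (c * s) * c) s := by
    simpa only [id, mul_one] using ((hasDerivAt_id s).const_mul c).exp
  have hexp_smul : ∀ s ∈ Icc a b, HasDerivAt (fun r ↦ Real.exp (c * r) • v r)
      (-((Real.exp (c * s) * c) • F s)) s := fun s hs ↦
    ((hexp s).smul (hv s hs)).congr_deriv (by module)
  have hderiv_le : ∀ s ∈ Ico a b,
      ‖-((Real.exp (c * s) * c) • F s)‖ ≤ Real.exp (c * s) * c * V := fun s hs ↦ by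
    have hnonneg : 0 ≤ Real.exp (c * s) * c := by positivity
    rw [norm_neg, norm_smul, Real.norm_of_nonneg hnonneg]
    exact mul_le_mul_of_nonneg_left (hF s (Ico_subset_Icc_self hs)) hnonneg
  have hexp_norm (s : ℝ) : ‖Real.exp (c * s) • v s‖ = Real.exp (c * s) * ‖v s‖ := by
    rw [norm_smul, Real.norm_of_nonneg (Real.exp_pos _).le]
  have hexp_le : ‖Real.exp (c * t) • v t‖ ≤ Real.exp (c * t) * V :=
    image_norm_le_of_norm_deriv_right_le_deriv_boundary (B := fun r ↦ Real.exp (c * r) * V)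
      (fun s hs ↦ (hexp_smul s hs).continuousAt.continuousWithinAt)
      (fun s hs ↦ (hexp_smul s (Ico_subset_Icc_self hs)).hasDerivWithinAt)
      ((hexp_norm a).trans_le (mul_le_mul_of_nonneg_left ha (Real.exp_pos _).le))
      (fun s ↦ (hexp s).mul_const V) hderiv_le ht
  exact le_of_mul_le_mul_left (hexp_norm t ▸ hexp_le) (Real.exp_pos _)

theorem norm_sub_le_of_hasDerivAt_damped {x v F : ℝ → E} {a b c V : ℝ} (hc : 0 ≤ c)
    (hx : ∀ t ∈ Icc a b, HasDerivAt x (v t) t)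
    (hv : ∀ t ∈ Icc a b, HasDerivAt v (c • (-v t - F t)) t) (hF : ∀ t ∈ Icc a b, ‖F t‖ ≤ V)
    (ha : ‖v a‖ ≤ V) {s t : ℝ} (hs : s ∈ Icc a b) (ht : t ∈ Icc a b) :
    ‖x t - x s‖ ≤ V * |t - s| :=
  (convex_Icc a b).norm_image_sub_le_of_norm_hasDerivWithin_le
    (fun r hr ↦ (hx r hr).hasDerivWithinAt)
    (fun _ hr ↦ norm_le_of_hasDerivAt_damped hc hv hF ha hr) hs ht

end Damping

theorem ae_norm_snd_le_of_measure_eq_zero {E F : Type*} [SeminormedAddCommGroup E]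
    [SeminormedAddCommGroup F] [MeasurableSpace E] [MeasurableSpace F] {μ : Measure (E × F)}
    {R : ℝ} (hR : 0 ≤ R) (hμ : μ {p | R ^ 2 < ‖p.1‖ ^ 2 + ‖p.2‖ ^ 2} = 0) :
    ∀ᵐ p ∂μ, ‖p.2‖ ≤ R := by
  filter_upwards [measure_eq_zero_iff_ae_notMem.1 hμ] with p hp
  have hsq : ‖p.1‖ ^ 2 + ‖p.2‖ ^ 2 ≤ R ^ 2 := not_lt.1 hp
  exact le_of_sq_le_sq ((le_add_of_nonneg_left (sq_nonneg _)).trans hsq) hR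

section InteractionField

variable {d : ℕ} {gradK : EuclideanSpace ℝ (Fin d) → EuclideanSpace ℝ (Fin d)} {M : ℝ}

theorem norm_interactionField_le (hbound : ∀ z, ‖gradK z‖ ≤ M)
    (μ : Measure (EuclideanSpace ℝ (Fin d))) [IsFiniteMeasure μ] (x : EuclideanSpace ℝ (Fin d)) :
    ‖interactionField gradK μ x‖ ≤ M * μ.real univ :=
  norm_integral_le_of_norm_le_const (.of_forall fun y ↦ hbound (x - y))

variable {Ω : Type*} [MeasurableSpace Ω] {ν : Measure Ω} {X Y : Ω → EuclideanSpace ℝ (Fin d)}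

theorem interactionField_map (hK : Measurable gradK) (hX : AEMeasurable X ν)
    (x : EuclideanSpace ℝ (Fin d)) :
    interactionField gradK (ν.map X) x = ∫ ω, gradK (x - X ω) ∂ν :=
  integral_map hX (hK.comp (measurable_const.sub measurable_id)).aestronglyMeasurable

theorem norm_interactionField_map_sub_le [IsFiniteMeasure ν] {L : NNReal}
    (hbound : ∀ z, ‖gradK z‖ ≤ M) (hlip : LipschitzWith L gradK)
    (hX : AEMeasurable X ν) (hY : AEMeasurable Y ν) {δ : ℝ} (hXY : ∀ᵐ ω ∂ν, ‖X ω - Y ω‖ ≤ δ)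
    (x y : EuclideanSpace ℝ (Fin d)) :
    ‖interactionField gradK (ν.map X) x - interactionField gradK (ν.map Y) y‖ ≤
      L * (‖x - y‖ + δ) * ν.real univ := by
  have hK : Measurable gradK := hlip.continuous.measurable
  have hint {Z : Ω → EuclideanSpace ℝ (Fin d)} (hZ : AEMeasurable Z ν)
      (z : EuclideanSpace ℝ (Fin d)) : Integrable (fun ω ↦ gradK (z - Z ω)) ν :=
    .of_bound (hK.comp_aemeasurable (hZ.const_sub z)).aestronglyMeasurable M
      (.of_forall fun _ ↦ hbound _)
  rw [interactionField_map hK hX, interactionField_map hK hY,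
    ← integral_sub (hint hX x) (hint hY y)]
  refine norm_integral_le_of_norm_le_const ?_
  filter_upwards [hXY] with ω hω
  calc ‖gradK (x - X ω) - gradK (y - Y ω)‖
      ≤ L * ‖(x - X ω) - (y - Y ω)‖ := hlip.norm_sub_le _ _
    _ = L * ‖(x - y) - (X ω - Y ω)‖ := by rw [sub_sub_sub_comm]
    _ ≤ L * (‖x - y‖ + δ) := by gcongr; exact norm_sub_le_of_le le_rfl hω

end InteractionField

section KineticSolution

variable {d : ℕ} {gradK : EuclideanSpace ℝ (Fin d) → EuclideanSpace ℝ (Fin d)} {ε T M R : ℝ}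
  {f₀ : Measure (EuclideanSpace ℝ (Fin d) × EuclideanSpace ℝ (Fin d))} [IsFiniteMeasure f₀]
  {f : ℝ → Measure (EuclideanSpace ℝ (Fin d) × EuclideanSpace ℝ (Fin d))}

theorem IsKineticMeasureSolution.exists_position_norm_sub_le
    (hf : IsKineticMeasureSolution gradK ε T f₀ f) (hε : 0 < ε) (hbound : ∀ z, ‖gradK z‖ ≤ M)
    (hvel : ∀ᵐ p ∂f₀, ‖p.2‖ ≤ R) :
    ∃ X : ℝ → EuclideanSpace ℝ (Fin d) × EuclideanSpace ℝ (Fin d) → EuclideanSpace ℝ (Fin d),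
      (∀ t, Measurable (X t)) ∧
      (∀ t ∈ Icc 0 T, (f t).map Prod.fst = f₀.map (X t)) ∧
      ∀ᵐ p ∂f₀, ∀ s ∈ Icc 0 T, ∀ t ∈ Icc 0 T,
        ‖X t p - X s p‖ ≤ max R (M * f₀.real univ) * |t - s| := by
  obtain ⟨Φ, hΦ_meas, hΦ_zero, hΦ_deriv, hf_map⟩ := hf
  have hX_meas (t : ℝ) : Measurable fun p ↦ (Φ t p).1 := measurable_fst.comp (hΦ_meas t)
  have hmarginal : ∀ t ∈ Icc 0 T, (f t).map Prod.fst = f₀.map fun p ↦ (Φ t p).1 := fun t ht ↦ by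
    rw [hf_map t ht, Measure.map_map measurable_fst (hΦ_meas t), Function.comp_def]
  have hforce : ∀ t ∈ Icc 0 T, ∀ x,
      ‖interactionField gradK ((f t).map Prod.fst) x‖ ≤ M * f₀.real univ := fun t ht x ↦ by
    rw [hmarginal t ht]
    simpa only [map_measureReal_apply (hX_meas t) .univ, preimage_univ] using
      norm_interactionField_le hbound (f₀.map fun p ↦ (Φ t p).1) x
  refine ⟨fun t p ↦ (Φ t p).1, hX_meas, hmarginal, ?_⟩
  filter_upwards [hvel] with p hp s hs t ht
  exact norm_sub_le_of_hasDerivAt_damped (inv_nonneg.2 hε.le)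
    (fun r hr ↦ (hΦ_deriv p r hr).1) (fun r hr ↦ (hΦ_deriv p r hr).2)
    (fun r hr ↦ (hforce r hr _).trans (le_max_right _ _))
    ((hΦ_zero p).symm ▸ hp.trans (le_max_left _ _)) hs ht

theorem interaction_field_spacetime_lipschitz_general
    (hf : IsKineticMeasureSolution gradK ε T f₀ f) (hε : 0 < ε) {L : NNReal}
    (hbound : ∀ z, ‖gradK z‖ ≤ M) (hlip : LipschitzWith L gradK) (hvel : ∀ᵐ p ∂f₀, ‖p.2‖ ≤ R)
    {s t : ℝ} (hs : s ∈ Icc 0 T) (ht : t ∈ Icc 0 T) (x y : EuclideanSpace ℝ (Fin d)) :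
    ‖interactionField gradK ((f t).map Prod.fst) x -
        interactionField gradK ((f s).map Prod.fst) y‖ ≤
      L * (‖x - y‖ + max R (M * f₀.real univ) * |t - s|) * f₀.real univ := by
  obtain ⟨X, hX_meas, hmarginal, hdisp⟩ := hf.exists_position_norm_sub_le hε hbound hvel
  rw [hmarginal t ht, hmarginal s hs]
  exact norm_interactionField_map_sub_le hbound hlip (hX_meas t).aemeasurable
    (hX_meas s).aemeasurable (hdisp.mono fun _ h ↦ h s hs t ht) x y

end KineticSolution

/-- **Equi-Lipschitz continuity in space-time of the interaction field
(uniformly in ε).** Assume `‖∇K‖_{W^{1,∞}} ≤ A` (i.e. `∇K` is bounded by `A`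
and `A`-Lipschitz), `f₀` is a probability measure supported in the ball
`B_{R₀}` of `ℝ^{2d}`, and `f` is a measure solution with `x`-marginals
`ρ t = (f t).map Prod.fst`. Then with `V = max R₀ A`, for all `s,t ∈ [0,T]`
and all `x,y`, `|(∇K ∗ ρ(t))(x) − (∇K ∗ ρ(s))(y)| ≤ A(1+V)(|t−s| + |x−y|)`;
in particular the field `(t,x) ↦ (∇K ∗ ρ(t))(x)` is Lipschitz with a constant
independent of `ε`. -/
theorem interaction_field_spacetime_lipschitz
    (d : ℕ) (T ε A R₀ : ℝ) (hT : 0 < T) (hε : 0 < ε) (hA : 0 ≤ A) (hR₀ : 0 ≤ R₀)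
    (gradK : EuclideanSpace ℝ (Fin d) → EuclideanSpace ℝ (Fin d))
    (hbound : ∀ z, ‖gradK z‖ ≤ A)
    (hlip : ∀ z w, ‖gradK z - gradK w‖ ≤ A * ‖z - w‖)
    (f₀ : Measure (EuclideanSpace ℝ (Fin d) × EuclideanSpace ℝ (Fin d)))
    [IsProbabilityMeasure f₀]
    (hsupp : f₀ {p | R₀ ^ 2 < ‖p.1‖ ^ 2 + ‖p.2‖ ^ 2} = 0)
    (f : ℝ → Measure (EuclideanSpace ℝ (Fin d) × EuclideanSpace ℝ (Fin d)))
    (hf : IsKineticMeasureSolution gradK ε T f₀ f) :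
    ∀ s ∈ Icc (0:ℝ) T, ∀ t ∈ Icc (0:ℝ) T,
      ∀ x y : EuclideanSpace ℝ (Fin d),
        ‖interactionField gradK ((f t).map Prod.fst) x -
            interactionField gradK ((f s).map Prod.fst) y‖ ≤
          A * (1 + max R₀ A) * (|t - s| + ‖x - y‖) := by
  lift A to NNReal using hA
  intro s hs t ht x y
  have hV : 0 ≤ max R₀ (A : ℝ) := le_max_of_le_left hR₀
  calc ‖interactionField gradK ((f t).map Prod.fst) x -
          interactionField gradK ((f s).map Prod.fst) y‖
      ≤ A * (‖x - y‖ + max R₀ A * |t - s|) := by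
        simpa only [probReal_univ, mul_one] using
          interaction_field_spacetime_lipschitz_general hf hε hbound
            (lipschitzWith_iff_norm_sub_le.2 hlip)
            (ae_norm_snd_le_of_measure_eq_zero hR₀ hsupp) hs ht x y
    _ ≤ A * ((1 + max R₀ A) * (|t - s| + ‖x - y‖)) := by
        gcongr
        nlinarith [mul_nonneg hV (norm_nonneg (x - y)), abs_nonneg (t - s)]
    _ = A * (1 + max R₀ A) * (|t - s| + ‖x - y‖) := (mul_assoc _ _ _).symm
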